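/- (Berkovich–Grizzell) Let L > 0 be an integer, let y > 1 be an odd integer, and let x be an integer with 1 < x ≤ y + 2. In the ring of formal power series over ℚ in one variable q, write a(L,x,y,n) for the coefficients of (∏_{j=0}^{L−1} (1 − q^{1+j(2y+2)})(1 − q^{x+j(2y+2)})(1 − q^{2y+j(2y+2)}))⁻¹ − (∏_{j=0}^{L−1} (1 − q^{2+j(2y+2)})(1 − q^{y+j(2y+2)})(1 − q^{2y+1+j(2y+2)}))⁻¹ = Σ_{n≥0} a(L,x,y,n) q^n. Then a(L,x,y,n) ≥ 0 for all n ≥ 0. -/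

import Mathlib

/-!
Write `(a; p)_n` for the `q`-Pochhammer product, `z = y + 1`, and take first the extreme case
`x = y + 2 = z + 1`. Interleaving the progressions with difference `2z`, the claim becomes that
`1 / ((q; q^z)_{2L} (q^{2y}; q^{2z})_L)` dominates `1 / ((q²; q^{2z})_L (q^y; q^z)_{2L})`.
On the first `L` factors of the long products use `1 / (a; p)_L = (-a; p)_L / (a²; p²)_L`. Both
sides then share the denominators `(q²; q^{2z})_L (q^{2y}; q^{2z})_L`, and what is left differs only
by the replacement of `q` by `q^y`. Moving exponents up decreases all partial sums of
the coefficients, and the factor `(1 + q) / (1 - q²) = 1 / (1 - q)` on the dominating side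
turns the comparison of partial sums into one of coefficients. On the other side that factor becomes
`(1 + q^y) / (1 - q²)`, which is coefficientwise at most `1 / (1 - q)` because `y` is odd.
The factor `1 / (1 - q)` likewise allows lowering `z + 1` to any smaller `x`.
-/

open PowerSeries

section QPochhammer

variable {R : Type*} [CommRing R]

/-- The finite `q`-Pochhammer symbol `(a; p)_n`, with the base `p` an arbitrary ring element;
`(q^c; q^m)_n` is `qPochhammer (X ^ c) (X ^ m) n`. -/
def qPochhammer (a p : R) (n : ℕ) : R := ∏ j ∈ Finset.range n, (1 - a * p ^ j)

theorem qPochhammer_succ (a p : R) (n : ℕ) :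
    qPochhammer a p (n + 1) = (1 - a) * qPochhammer (a * p) p n := by
  simp only [qPochhammer, Finset.prod_range_succ', pow_succ', pow_zero, mul_one, mul_assoc,
    mul_comm]

theorem qPochhammer_add (a p : R) (m n : ℕ) :
    qPochhammer a p (m + n) = qPochhammer a p m * qPochhammer (a * p ^ m) p n := by
  simp only [qPochhammer, Finset.prod_range_add, pow_add, mul_assoc]

theorem qPochhammer_add_self (a p : R) (n : ℕ) :
    qPochhammer a p (n + n) = qPochhammer a (p ^ 2) n * qPochhammer (a * p) (p ^ 2) n := by
  induction n with
  | zero => simp [qPochhammer]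
  | succ n ih =>
    simp only [qPochhammer] at ih ⊢
    rw [show n + 1 + (n + 1) = n + n + 1 + 1 by ring]
    simp only [Finset.prod_range_succ, ih]
    ring

theorem qPochhammer_mul_qPochhammer_neg (a p : R) (n : ℕ) :
    qPochhammer a p n * qPochhammer (-a) p n = qPochhammer (a ^ 2) (p ^ 2) n := by
  simp only [qPochhammer, ← Finset.prod_mul_distrib]
  exact Finset.prod_congr rfl fun j _ => by ring

theorem qPochhammer_X_pow (c m n : ℕ) :
    qPochhammer (X ^ c : R⟦X⟧) (X ^ m) n = ∏ j ∈ Finset.range n, (1 - X ^ (c + j * m)) := by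
  simp only [qPochhammer, pow_add, pow_mul']

theorem qPochhammer_X (m n : ℕ) :
    qPochhammer (X : R⟦X⟧) (X ^ m) n = ∏ j ∈ Finset.range n, (1 - X ^ (1 + j * m)) := by
  simpa only [pow_one] using qPochhammer_X_pow (R := R) 1 m n

theorem constantCoeff_qPochhammer {a : R⟦X⟧} (ha : constantCoeff a = 0) (p : R⟦X⟧) (n : ℕ) :
    constantCoeff (qPochhammer a p n) = 1 := by
  simp [qPochhammer, ha]

end QPochhammer

section Inverses

variable {K : Type*} [Field K]

theorem inv_one_sub_X_eq : (1 - X : K⟦X⟧)⁻¹ = (1 + X) * (1 - X ^ 2)⁻¹ := by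
  rw [PowerSeries.inv_eq_iff_mul_eq_one (by simp)]
  linear_combination PowerSeries.mul_inv_cancel (1 - X ^ 2 : K⟦X⟧) (by simp)

theorem inv_qPochhammer_succ (a p : K⟦X⟧) (n : ℕ) :
    (qPochhammer a p (n + 1))⁻¹ = (1 - a)⁻¹ * (qPochhammer (a * p) p n)⁻¹ := by
  rw [qPochhammer_succ, PowerSeries.mul_inv_rev, mul_comm]

/-- `(-ap; p)_m / (ap^{m+1}; p)_n`, the cofactor of `(1 + a) / (a²; p²)_{m+1}` in
`1 / (a; p)_{m+1+n}`. -/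
noncomputable def qPochhammerCofactor (a p : K⟦X⟧) (m n : ℕ) : K⟦X⟧ :=
  qPochhammer (-(a * p)) p m * (qPochhammer (a * p ^ (m + 1)) p n)⁻¹

theorem inv_qPochhammer_add_eq {a : K⟦X⟧} (ha₀ : constantCoeff a = 0) (p : K⟦X⟧) (m n : ℕ) :
    (qPochhammer a p (m + 1 + n))⁻¹
      = (1 + a) * (qPochhammer (a ^ 2) (p ^ 2) (m + 1))⁻¹ * qPochhammerCofactor a p m n := by
  have hneg : (qPochhammer a p (m + 1))⁻¹
      = qPochhammer (-a) p (m + 1) * (qPochhammer (a ^ 2) (p ^ 2) (m + 1))⁻¹ := by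
    rw [PowerSeries.eq_mul_inv_iff_mul_eq (by simp [constantCoeff_qPochhammer, ha₀]),
      ← qPochhammer_mul_qPochhammer_neg, ← mul_assoc,
      PowerSeries.inv_mul_cancel _ (by simp [constantCoeff_qPochhammer, ha₀]), one_mul]
  rw [qPochhammer_add, PowerSeries.mul_inv_rev, hneg, qPochhammer_succ (-a), sub_neg_eq_add,
    neg_mul, qPochhammerCofactor]
  ring

end Inverses

section NonnegCoeff

/-- The power series with nonnegative coefficients. -/
def nonnegCoeff (R : Type*) [Semiring R] [PartialOrder R] [IsOrderedRing R] :
    Subsemiring R⟦X⟧ where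
  carrier := {f | ∀ n, 0 ≤ coeff n f}
  zero_mem' n := by simp
  one_mem' n := by
    rw [coeff_one]
    split_ifs
    exacts [zero_le_one, le_rfl]
  add_mem' hf hg n := by
    rw [map_add]
    exact add_nonneg (hf n) (hg n)
  mul_mem' hf hg n := by
    rw [coeff_mul]
    exact Finset.sum_nonneg fun i _ => mul_nonneg (hf i.1) (hg i.2)

theorem X_mem_nonnegCoeff {R : Type*} [Semiring R] [PartialOrder R] [IsOrderedRing R] :
    (X : R⟦X⟧) ∈ nonnegCoeff R := fun n => by
  rw [coeff_X]
  split_ifs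
  exacts [zero_le_one, le_rfl]

theorem qPochhammer_neg_mem_nonnegCoeff {R : Type*} [CommRing R] [PartialOrder R] [IsOrderedRing R]
    {a p : R⟦X⟧} (ha : a ∈ nonnegCoeff R) (hp : p ∈ nonnegCoeff R) (n : ℕ) :
    qPochhammer (-a) p n ∈ nonnegCoeff R :=
  prod_mem fun j _ => by
    rw [neg_mul, sub_neg_eq_add]
    exact add_mem (one_mem _) (mul_mem ha (pow_mem hp j))

variable {K : Type*} [Field K] [LinearOrder K] [IsStrictOrderedRing K]

theorem inv_one_sub_mem_nonnegCoeff {f : K⟦X⟧} (hf : f ∈ nonnegCoeff K)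
    (hf₀ : constantCoeff f = 0) : (1 - f)⁻¹ ∈ nonnegCoeff K := by
  have hrec : (1 - f)⁻¹ = 1 + f * (1 - f)⁻¹ := by
    linear_combination PowerSeries.mul_inv_cancel (1 - f) (by simp [hf₀])
  intro n
  induction n using Nat.strong_induction_on with
  | _ n ih =>
    rw [hrec, map_add, coeff_mul]
    refine add_nonneg ((nonnegCoeff K).one_mem n) (Finset.sum_nonneg fun ⟨i, j⟩ hij => ?_)
    rcases i.eq_zero_or_pos with rfl | hi
    · simp [hf₀]
    · rw [Finset.HasAntidiagonal.mem_antidiagonal] at hij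
      exact mul_nonneg (hf i) (ih j (by omega))

theorem inv_qPochhammer_mem_nonnegCoeff {a p : K⟦X⟧} (ha : a ∈ nonnegCoeff K)
    (ha₀ : constantCoeff a = 0) (hp : p ∈ nonnegCoeff K) (n : ℕ) :
    (qPochhammer a p n)⁻¹ ∈ nonnegCoeff K := by
  induction n generalizing a with
  | zero => simp [qPochhammer]
  | succ n ih =>
    rw [inv_qPochhammer_succ]
    exact mul_mem (inv_one_sub_mem_nonnegCoeff ha ha₀) (ih (mul_mem ha hp) (by simp [ha₀]))

theorem inv_one_sub_X_sub_mem_nonnegCoeff {y : ℕ} (hy : Odd y) :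
    (1 - X)⁻¹ - (1 + X ^ y) * (1 - X ^ 2)⁻¹ ∈ nonnegCoeff K := by
  obtain ⟨m, rfl⟩ := hy
  have hsum : (1 - X : K⟦X⟧)⁻¹ - (1 + X ^ (2 * m + 1)) * (1 - X ^ 2)⁻¹
      = X * ∑ i ∈ Finset.range m, (X ^ 2) ^ i := by
    have hinv := PowerSeries.mul_inv_cancel (1 - X ^ 2 : K⟦X⟧) (by simp)
    rw [inv_one_sub_X_eq]
    linear_combination X * (1 - X ^ 2 : K⟦X⟧)⁻¹ * geom_sum_mul (X ^ 2 : K⟦X⟧) m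
      + X * (∑ i ∈ Finset.range m, (X ^ 2 : K⟦X⟧) ^ i) * hinv
  rw [hsum]
  exact mul_mem X_mem_nonnegCoeff
    (sum_mem fun i _ => pow_mem (pow_mem X_mem_nonnegCoeff 2) i)

end NonnegCoeff

section PartialSums

variable {K : Type*} [Field K] [LinearOrder K] [IsStrictOrderedRing K]

/-- Every partial sum of the coefficients of `f` is at most the corresponding one of `g`. Partial
sums are encoded as the coefficients of the product with `1 / (1 - X)`. -/
def PartialSumsLE (f g : K⟦X⟧) : Prop := (1 - X)⁻¹ * (g - f) ∈ nonnegCoeff K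

namespace PartialSumsLE

theorem refl (f : K⟦X⟧) : PartialSumsLE f f := by
  simp [PartialSumsLE]

theorem X_pow {a b : ℕ} (hab : a ≤ b) : PartialSumsLE (X ^ b : K⟦X⟧) (X ^ a) := by
  obtain ⟨d, rfl⟩ := Nat.exists_eq_add_of_le hab
  have hsum : (1 - X : K⟦X⟧)⁻¹ * (X ^ a - X ^ (a + d))
      = X ^ a * ∑ i ∈ Finset.range d, X ^ i := by
    linear_combination (1 - X : K⟦X⟧)⁻¹ * X ^ a * geom_sum_mul (X : K⟦X⟧) d
      + X ^ a * (∑ i ∈ Finset.range d, (X : K⟦X⟧) ^ i)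
        * PowerSeries.mul_inv_cancel (1 - X : K⟦X⟧) (by simp)
  rw [PartialSumsLE, hsum]
  exact mul_mem (pow_mem X_mem_nonnegCoeff a)
    (sum_mem fun i _ => pow_mem X_mem_nonnegCoeff i)

theorem mul {f₁ f₂ g₁ g₂ : K⟦X⟧} (h₁ : PartialSumsLE f₁ g₁) (h₂ : PartialSumsLE f₂ g₂)
    (hf₁ : f₁ ∈ nonnegCoeff K) (hg₂ : g₂ ∈ nonnegCoeff K) :
    PartialSumsLE (f₁ * f₂) (g₁ * g₂) := by
  have hsplit : (1 - X)⁻¹ * (g₁ * g₂ - f₁ * f₂)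
      = (1 - X)⁻¹ * (g₁ - f₁) * g₂ + f₁ * ((1 - X)⁻¹ * (g₂ - f₂)) := by ring
  rw [PartialSumsLE, hsplit]
  exact add_mem (mul_mem h₁ hg₂) (mul_mem hf₁ h₂)

theorem mul_right {f g p : K⟦X⟧} (h : PartialSumsLE f g) (hp : p ∈ nonnegCoeff K) :
    PartialSumsLE (f * p) (g * p) := by
  rw [PartialSumsLE, ← sub_mul, ← mul_assoc]
  exact mul_mem h hp

theorem inv_one_sub {f g : K⟦X⟧} (h : PartialSumsLE f g)
    (hf : f ∈ nonnegCoeff K) (hg : g ∈ nonnegCoeff K)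
    (hf₀ : constantCoeff f = 0) (hg₀ : constantCoeff g = 0) :
    PartialSumsLE (1 - f)⁻¹ (1 - g)⁻¹ := by
  have hdiff : (1 - g)⁻¹ - (1 - f)⁻¹ = (g - f) * ((1 - f)⁻¹ * (1 - g)⁻¹) := by
    linear_combination (1 - f)⁻¹ * PowerSeries.mul_inv_cancel (1 - g) (by simp [hg₀])
      - (1 - g)⁻¹ * PowerSeries.mul_inv_cancel (1 - f) (by simp [hf₀])
  rw [PartialSumsLE, hdiff, ← mul_assoc]
  exact mul_mem h (mul_mem (inv_one_sub_mem_nonnegCoeff hf hf₀)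
    (inv_one_sub_mem_nonnegCoeff hg hg₀))

theorem qPochhammer_neg {a b p : K⟦X⟧} (h : PartialSumsLE a b) (ha : a ∈ nonnegCoeff K)
    (hb : b ∈ nonnegCoeff K) (hp : p ∈ nonnegCoeff K) (n : ℕ) :
    PartialSumsLE (qPochhammer (-a) p n) (qPochhammer (-b) p n) := by
  induction n generalizing a b with
  | zero => exact refl 1
  | succ n ih =>
    have hhead : PartialSumsLE (1 + a) (1 + b) := by
      simpa only [PartialSumsLE, add_sub_add_left_eq_sub] using h
    simp only [qPochhammer_succ, neg_mul, sub_neg_eq_add]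
    exact hhead.mul (ih (h.mul_right hp) (mul_mem ha hp) (mul_mem hb hp))
      (add_mem (one_mem _) ha) (qPochhammer_neg_mem_nonnegCoeff (mul_mem hb hp) hp n)

theorem inv_qPochhammer {a b p : K⟦X⟧} (h : PartialSumsLE a b) (ha : a ∈ nonnegCoeff K)
    (hb : b ∈ nonnegCoeff K) (ha₀ : constantCoeff a = 0) (hb₀ : constantCoeff b = 0)
    (hp : p ∈ nonnegCoeff K) (n : ℕ) :
    PartialSumsLE (qPochhammer a p n)⁻¹ (qPochhammer b p n)⁻¹ := by
  induction n generalizing a b with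
  | zero => exact refl _
  | succ n ih =>
    simp only [inv_qPochhammer_succ]
    exact (h.inv_one_sub ha hb ha₀ hb₀).mul
      (ih (h.mul_right hp) (mul_mem ha hp) (mul_mem hb hp) (by simp [ha₀]) (by simp [hb₀]))
      (inv_one_sub_mem_nonnegCoeff ha ha₀)
      (inv_qPochhammer_mem_nonnegCoeff (mul_mem hb hp) (by simp [hb₀]) hp n)

end PartialSumsLE

end PartialSums

section Comparison

variable {K : Type*} [Field K] [LinearOrder K] [IsStrictOrderedRing K]

theorem qPochhammerCofactor_mem_nonnegCoeff {a p : K⟦X⟧} (ha : a ∈ nonnegCoeff K)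
    (ha₀ : constantCoeff a = 0) (hp : p ∈ nonnegCoeff K) (m n : ℕ) :
    qPochhammerCofactor a p m n ∈ nonnegCoeff K :=
  mul_mem (qPochhammer_neg_mem_nonnegCoeff (mul_mem ha hp) hp m)
    (inv_qPochhammer_mem_nonnegCoeff (mul_mem ha (pow_mem hp _)) (by simp [ha₀]) hp n)

theorem PartialSumsLE.qPochhammerCofactor {a b p : K⟦X⟧} (h : PartialSumsLE a b)
    (ha : a ∈ nonnegCoeff K) (hb : b ∈ nonnegCoeff K) (ha₀ : constantCoeff a = 0)
    (hb₀ : constantCoeff b = 0) (hp : p ∈ nonnegCoeff K) (m n : ℕ) :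
    PartialSumsLE (qPochhammerCofactor a p m n) (qPochhammerCofactor b p m n) := by
  have hpow := pow_mem hp (m + 1)
  exact ((h.mul_right hp).qPochhammer_neg (mul_mem ha hp) (mul_mem hb hp) hp m).mul
    ((h.mul_right hpow).inv_qPochhammer (mul_mem ha hpow) (mul_mem hb hpow)
      (by simp [ha₀]) (by simp [hb₀]) hp n)
    (qPochhammer_neg_mem_nonnegCoeff (mul_mem ha hp) hp m)
    (inv_qPochhammer_mem_nonnegCoeff (mul_mem hb hpow) (by simp [hb₀]) hp n)

theorem inv_qPochhammer_X_sub_mem_nonnegCoeff {p : K⟦X⟧} (hp : p ∈ nonnegCoeff K) {y : ℕ}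
    (hy : Odd y) (m n : ℕ) :
    (qPochhammer X p (m + 1 + n))⁻¹ * (qPochhammer (X ^ (2 * y)) (p ^ 2) (m + 1))⁻¹ -
      (qPochhammer (X ^ 2) (p ^ 2) (m + 1))⁻¹ * (qPochhammer (X ^ y) p (m + 1 + n))⁻¹
      ∈ nonnegCoeff K := by
  have hX : (X : K⟦X⟧) ∈ nonnegCoeff K := X_mem_nonnegCoeff
  have hp2 := pow_mem hp 2
  have hXy₀ : constantCoeff (X ^ y : K⟦X⟧) = 0 := by simp [hy.pos.ne']
  set U := qPochhammerCofactor (X : K⟦X⟧) p m n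
  set V := qPochhammerCofactor (X ^ y : K⟦X⟧) p m n
  have hV : V ∈ nonnegCoeff K := qPochhammerCofactor_mem_nonnegCoeff (pow_mem hX y) hXy₀ hp m n
  have hXy_le : PartialSumsLE (X ^ y : K⟦X⟧) X := by
    simpa using PartialSumsLE.X_pow (K := K) hy.pos
  have hVU : PartialSumsLE V U :=
    hXy_le.qPochhammerCofactor (pow_mem hX y) hX hXy₀ constantCoeff_X hp m n
  set D := (qPochhammer (X ^ 2 * p ^ 2 : K⟦X⟧) (p ^ 2) m)⁻¹ *
    (qPochhammer (X ^ (2 * y) : K⟦X⟧) (p ^ 2) (m + 1))⁻¹ with hD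
  have hD_mem : D ∈ nonnegCoeff K :=
    mul_mem (inv_qPochhammer_mem_nonnegCoeff (mul_mem (pow_mem hX 2) hp2) (by simp) hp2 m)
      (inv_qPochhammer_mem_nonnegCoeff (pow_mem hX _) (by simp [hy.pos.ne']) hp2 (m + 1))
  have hsplit : (qPochhammer X p (m + 1 + n))⁻¹ *
        (qPochhammer (X ^ (2 * y)) (p ^ 2) (m + 1))⁻¹ -
      (qPochhammer (X ^ 2) (p ^ 2) (m + 1))⁻¹ * (qPochhammer (X ^ y) p (m + 1 + n))⁻¹
      = D * ((1 - X)⁻¹ * (U - V) + ((1 - X)⁻¹ - (1 + X ^ y) * (1 - X ^ 2)⁻¹) * V) := by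
    rw [inv_qPochhammer_add_eq constantCoeff_X, inv_qPochhammer_add_eq hXy₀, ← pow_mul,
      mul_comm y, inv_qPochhammer_succ (X ^ 2), inv_one_sub_X_eq, hD]
    ring
  rw [hsplit]
  exact mul_mem hD_mem (add_mem hVU (mul_mem (inv_one_sub_X_sub_mem_nonnegCoeff hy) hV))

theorem inv_qPochhammer_X_mul_sub_mem_nonnegCoeff {a b p : K⟦X⟧} (h : PartialSumsLE a b)
    (ha : a ∈ nonnegCoeff K) (hb : b ∈ nonnegCoeff K) (ha₀ : constantCoeff a = 0)
    (hb₀ : constantCoeff b = 0) (hp : p ∈ nonnegCoeff K) (n : ℕ) :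
    (qPochhammer X p n)⁻¹ * ((qPochhammer b p n)⁻¹ - (qPochhammer a p n)⁻¹)
      ∈ nonnegCoeff K := by
  cases n with
  | zero => simp [qPochhammer]
  | succ n =>
    rw [inv_qPochhammer_succ X, mul_right_comm]
    exact mul_mem (h.inv_qPochhammer ha hb ha₀ hb₀ hp (n + 1))
      (inv_qPochhammer_mem_nonnegCoeff (mul_mem X_mem_nonnegCoeff hp) (by simp) hp n)

theorem berkovich_grizzell_x_version_general (L z : ℕ) {x y : ℕ} (hy : Odd y) (hx : 0 < x)
    (hxz : x ≤ z + 1) :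
    (qPochhammer X (X ^ (2 * z)) L *
        (qPochhammer (X ^ x) (X ^ (2 * z)) L * qPochhammer (X ^ (2 * y)) (X ^ (2 * z)) L))⁻¹ -
      (qPochhammer (X ^ 2) (X ^ (2 * z)) L *
        (qPochhammer (X ^ y) (X ^ (2 * z)) L * qPochhammer (X ^ (y + z)) (X ^ (2 * z)) L))⁻¹
      ∈ nonnegCoeff K := by
  rcases L with _ | m
  · simp [qPochhammer]
  have hX (k : ℕ) : (X ^ k : K⟦X⟧) ∈ nonnegCoeff K := pow_mem X_mem_nonnegCoeff k
  have extreme := inv_qPochhammer_X_sub_mem_nonnegCoeff (hX z) hy m (m + 1)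
  have lower := inv_qPochhammer_X_mul_sub_mem_nonnegCoeff (PartialSumsLE.X_pow hxz) (hX (z + 1))
    (hX x) (by simp) (by simp [hx.ne']) (hX (2 * z)) (m + 1)
  have hlast : (qPochhammer (X ^ (2 * y)) (X ^ (2 * z)) (m + 1))⁻¹ ∈ nonnegCoeff K :=
    inv_qPochhammer_mem_nonnegCoeff (hX _) (by simp [hy.pos.ne']) (hX _) (m + 1)
  simp only [qPochhammer_add_self, ← pow_mul', ← pow_succ', ← pow_add] at extreme
  convert add_mem (mul_mem lower hlast) extreme using 1
  simp only [PowerSeries.mul_inv_rev]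
  ring

end Comparison

theorem berkovich_grizzell_x_version (L x y : ℕ) (hL : 0 < L) (hy : 1 < y) (hyo : Odd y)
    (hx1 : 1 < x) (hx2 : x ≤ y + 2) (n : ℕ) :
    0 ≤ PowerSeries.coeff (R := ℚ) n
      ((∏ j ∈ Finset.range L,
          (1 - (PowerSeries.X : PowerSeries ℚ) ^ (1 + j * (2 * y + 2))) *
          ((1 - (PowerSeries.X : PowerSeries ℚ) ^ (x + j * (2 * y + 2))) *
           (1 - (PowerSeries.X : PowerSeries ℚ) ^ (2 * y + j * (2 * y + 2)))))⁻¹ -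
       (∏ j ∈ Finset.range L,
          (1 - (PowerSeries.X : PowerSeries ℚ) ^ (2 + j * (2 * y + 2))) *
          ((1 - (PowerSeries.X : PowerSeries ℚ) ^ (y + j * (2 * y + 2))) *
           (1 - (PowerSeries.X : PowerSeries ℚ) ^ (2 * y + 1 + j * (2 * y + 2)))))⁻¹) := by
  have h :=
    berkovich_grizzell_x_version_general (K := ℚ) L (y + 1) hyo (zero_lt_one.trans hx1) hx2 n
  simpa only [mul_add_one 2 y, ← add_assoc, ← two_mul, qPochhammer_X, qPochhammer_X_pow,
    ← Finset.prod_mul_distrib] using h
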